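/- arXiv:2512.17285 — 2 statements merged into one kernel-verified Lean document; each statement's English description precedes it below -/
import Mathlib

section
/- (Marchwicki–Miska) For every set K ⊆ ℕ such that both K and ℕ \ K are infinite, there exists a sequence a : ℕ → ℝ of positive terms with ∑ₙ a(n) < ∞ such that K(a) = K and the achievement set E(a) is a Cantor set. -/
/-!
The sequence is a rearrangement of the terms `2 / 3 ^ m`, `m ≥ 1`, whose set of subsums is
exactly the ternary Cantor set (`achievementSet_ternaryTerm`). Subsums are unconditional, so the
rearrangement has the same achievement set; only the Kakeya conditions depend on the order.

Write `K = {k₁ < k₂ < ⋯}` and `k₀ = 0`. The permutation `blockReverse K` reverses each block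
`(k_j, k_{j+1}]` of indices. The last index `n = k_{j+1}` of a block then carries a term larger
than every later one, and since the terms are distinct powers of `1/3` up to a factor, the later
terms add up to at most half of it, so `n` is a Kakeya condition. An index `n` of the block other
than the last is followed by a term three times larger, so `n` is not a Kakeya condition.
-/

open Set Filter Topology MeasureTheory
open scoped Pointwise

/-- The achievement set (set of subsums) of the series `∑_{n ≥ 1} x n`
(sequences are indexed by `n ≥ 1`; the value `x 0` is irrelevant). -/
def achievementSet (x : ℕ → ℝ) : Set ℝ :=
  {y : ℝ | ∃ A : Set ℕ, A ⊆ {n | 1 ≤ n} ∧ HasSum (fun n : A => x (n : ℕ)) y}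

/-- The `n`-th remainder `r n = ∑_{i > n} x i` of a series. -/
noncomputable def remainder (x : ℕ → ℝ) (n : ℕ) : ℝ :=
  ∑' i : {i : ℕ // n < i}, x (i : ℕ)

/-- The set of Kakeya conditions `K(x) = {n ≥ 1 : x n > r n}`. -/
def kakeyaSet (x : ℕ → ℝ) : Set ℕ :=
  {n : ℕ | 1 ≤ n ∧ remainder x n < x n}

/-- A Cantor set: a set homeomorphic to the Cantor ternary set. -/
def IsCantorSet (A : Set ℝ) : Prop :=
  Nonempty (A ≃ₜ cantorSet)

/-- A multi-interval set: the union of finitely many (at least one)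
nondegenerate compact intervals. -/
def IsMultiInterval (A : Set ℝ) : Prop :=
  ∃ S : Finset (ℝ × ℝ), S.Nonempty ∧ (∀ p ∈ S, p.1 < p.2) ∧
    A = ⋃ p ∈ S, Set.Icc p.1 p.2

/-- The gaps of a set `A ⊆ ℝ`: the bounded connected components of its complement. -/
def gaps (A : Set ℝ) : Set (Set ℝ) :=
  {G | (∃ x ∉ A, G = connectedComponentIn Aᶜ x) ∧ Bornology.IsBounded G}

/-- The nondegenerate connected components of a set `A ⊆ ℝ`. -/
def intervalComponents (A : Set ℝ) : Set (Set ℝ) :=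
  {I | (∃ x ∈ A, I = connectedComponentIn A x) ∧ ¬ I.Subsingleton}

/-- A Cantorval: a nonempty compact subset of `ℝ` possessing at least one gap and at
least one nondegenerate component, such that both endpoints of every gap are
accumulation points both of other gaps and of nondegenerate components. -/
def IsCantorval (A : Set ℝ) : Prop :=
  A.Nonempty ∧ IsCompact A ∧ (gaps A).Nonempty ∧ (intervalComponents A).Nonempty ∧
    ∀ G ∈ gaps A, ∀ p ∈ ({sInf G, sSup G} : Set ℝ),
      (∀ ε > (0 : ℝ), ∃ G' ∈ gaps A, G' ≠ G ∧ (G' ∩ Metric.ball p ε).Nonempty) ∧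
      (∀ ε > (0 : ℝ), ∃ I ∈ intervalComponents A, (I ∩ (Metric.ball p ε \ {p})).Nonempty)

/-- `(p, q]` is one of the blocks into which the positive integers are cut after each element
of `K`; the first block starts after `p = 0`. The condition `p < q` is left out of the definition,
which is only used for intervals `(p, q]` containing a given index. -/
def IsBlock (K : Set ℕ) (p q : ℕ) : Prop :=
  (p = 0 ∨ p ∈ K) ∧ q ∈ K ∧ ∀ k ∈ K, p < k → q ≤ k

lemma exists_isBlock {K : Set ℕ} (hKinf : K.Infinite) {n : ℕ} (hn : 1 ≤ n) :
    ∃ p q, IsBlock K p q ∧ p < n ∧ n ≤ q := by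
  classical
  have hex : ∃ k, k ∈ K ∧ n ≤ k := by
    obtain ⟨k, hk, hnk⟩ := hKinf.exists_gt n
    exact ⟨k, hk, hnk.le⟩
  set p := Nat.findGreatest (fun k => k ∈ K) (n - 1) with hp
  have hpn : p ≤ n - 1 := Nat.findGreatest_le _
  refine ⟨p, Nat.find hex, ⟨?_, (Nat.find_spec hex).1, fun k hk hpk => ?_⟩, by omega,
    (Nat.find_spec hex).2⟩
  · by_cases h0 : p = 0
    · exact Or.inl h0
    · exact Or.inr (Nat.findGreatest_of_ne_zero (P := fun k => k ∈ K) hp.symm h0)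
  · refine Nat.find_min' hex ⟨hk, ?_⟩
    by_contra hlt
    exact Nat.findGreatest_is_greatest (P := fun k => k ∈ K) hpk (by omega) hk

lemma IsBlock.unique {K : Set ℕ} {p q p' q' n : ℕ} (h : IsBlock K p q) (h' : IsBlock K p' q')
    (hp : p < n) (hq : n ≤ q) (hp' : p' < n) (hq' : n ≤ q') : p = p' ∧ q = q' := by
  obtain ⟨h1, h2, h3⟩ := h
  obtain ⟨h1', h2', h3'⟩ := h'
  have := h3 q' h2' (by omega)
  have := h3' q h2 (by omega)
  refine ⟨?_, by omega⟩
  rcases lt_trichotomy p p' with hlt | heq | hlt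
  · rcases h1' with h0 | hm
    · omega
    · have := h3 p' hm hlt
      omega
  · exact heq
  · rcases h1 with h0 | hm
    · omega
    · have := h3' p hm hlt
      omega

open Classical in
/-- The map on `ℕ` that reverses each block `(p, q]` of `K`, sending `n` to `p + q + 1 - n`,
and fixes every number lying in no block. -/
noncomputable def blockReverse (K : Set ℕ) (n : ℕ) : ℕ :=
  if h : ∃ b : ℕ × ℕ, IsBlock K b.1 b.2 ∧ b.1 < n ∧ n ≤ b.2 then
    h.choose.1 + h.choose.2 + 1 - n
  else n

lemma IsBlock.blockReverse_eq {K : Set ℕ} {p q n : ℕ} (h : IsBlock K p q) (hp : p < n)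
    (hq : n ≤ q) : blockReverse K n = p + q + 1 - n := by
  have hex : ∃ b : ℕ × ℕ, IsBlock K b.1 b.2 ∧ b.1 < n ∧ n ≤ b.2 := ⟨(p, q), h, hp, hq⟩
  obtain ⟨e1, e2⟩ := hex.choose_spec.1.unique h hex.choose_spec.2.1 hex.choose_spec.2.2 hp hq
  rw [blockReverse, dif_pos hex, e1, e2]

lemma blockReverse_involutive (K : Set ℕ) : Function.Involutive (blockReverse K) := by
  intro n
  by_cases hex : ∃ b : ℕ × ℕ, IsBlock K b.1 b.2 ∧ b.1 < n ∧ n ≤ b.2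
  · obtain ⟨⟨p, q⟩, h, hp, hq⟩ := hex
    dsimp only at h hp hq
    rw [h.blockReverse_eq hp hq, h.blockReverse_eq (by omega) (by omega)]
    omega
  · have : blockReverse K n = n := by rw [blockReverse, dif_neg hex]
    rw [this, this]

lemma blockReverse_zero (K : Set ℕ) : blockReverse K 0 = 0 := by
  rw [blockReverse, dif_neg]
  rintro ⟨b, -, h, -⟩
  omega

lemma blockReverse_pos (K : Set ℕ) {n : ℕ} (hn : 1 ≤ n) : 1 ≤ blockReverse K n := by
  by_contra h
  have h0 : blockReverse K n = 0 := by omega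
  have := blockReverse_involutive K n
  rw [h0, blockReverse_zero] at this
  omega

/-- An element of `K` is the last index of its block, hence the reversal sends it below the image
of every later index. -/
lemma blockReverse_lt_of_mem {K : Set ℕ} (hKinf : K.Infinite) {n : ℕ} (hn : 1 ≤ n) (hnK : n ∈ K)
    {i : ℕ} (hi : n < i) : blockReverse K n < blockReverse K i := by
  obtain ⟨p, q, h, hp, hq⟩ := exists_isBlock hKinf hn
  obtain ⟨p', q', h', hp', hq'⟩ := exists_isBlock hKinf (n := i) (by omega)
  rw [h.blockReverse_eq hp hq, h'.blockReverse_eq hp' hq']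
  have := h.2.2 n hnK hp
  have hnp' : n ≤ p' := by
    by_contra hlt
    have := h'.2.2 n hnK (by omega)
    omega
  omega

lemma blockReverse_succ_of_notMem {K : Set ℕ} (hKinf : K.Infinite) {n : ℕ} (hn : 1 ≤ n)
    (hnK : n ∉ K) : blockReverse K n = blockReverse K (n + 1) + 1 := by
  obtain ⟨p, q, h, hp, hq⟩ := exists_isBlock hKinf hn
  have hne : n ≠ q := fun e => hnK (e ▸ h.2.1)
  rw [h.blockReverse_eq hp hq, h.blockReverse_eq (n := n + 1) (by omega) (by omega)]
  omega

/-- The value at index `m ≥ 1` of the ternary digit `2` in position `m`. -/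
noncomputable def ternaryTerm (m : ℕ) : ℝ := 2 * (3 ^ m)⁻¹

lemma ternaryTerm_pos (m : ℕ) : 0 < ternaryTerm m := by
  unfold ternaryTerm
  positivity

lemma ternaryTerm_add (m j : ℕ) : ternaryTerm (m + j) = ternaryTerm m * (1 / 3) ^ j := by
  unfold ternaryTerm
  rw [pow_add, mul_inv, one_div, inv_pow, mul_assoc]

lemma summable_ternaryTerm : Summable ternaryTerm := by
  have h : Summable fun m : ℕ => ternaryTerm 0 * (1 / 3 : ℝ) ^ m :=
    (summable_geometric_of_lt_one (by norm_num) (by norm_num)).mul_left _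
  refine h.congr fun m => ?_
  rw [← ternaryTerm_add, zero_add]

/-- A sum indexed by `ι` of terms `ternaryTerm (φ i)` with `φ` injective and above `m` is at most
`∑_{j > m} ternaryTerm j = ternaryTerm m / 2`. -/
lemma tsum_ternaryTerm_le {ι : Type*} {φ : ι → ℕ} (hφ : Function.Injective φ) {m : ℕ}
    (hm : ∀ i, m < φ i) : ∑' i, ternaryTerm (φ i) ≤ ternaryTerm m / 2 := by
  have hgeo : HasSum (fun j : ℕ => ternaryTerm (m + 1) * (1 / 3 : ℝ) ^ j) (ternaryTerm m / 2) := by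
    have h := (hasSum_geometric_of_lt_one (r := (1 / 3 : ℝ)) (by norm_num)
      (by norm_num)).mul_left (ternaryTerm (m + 1))
    have hval : ternaryTerm (m + 1) * (1 - 1 / 3 : ℝ)⁻¹ = ternaryTerm m / 2 := by
      rw [ternaryTerm_add]
      ring
    rwa [hval] at h
  rw [← hgeo.tsum_eq]
  refine (summable_ternaryTerm.comp_injective hφ).tsum_le_tsum_of_inj
    (fun i => φ i - (m + 1)) (fun i j hij => hφ ?_) (fun j _ => ?_) (fun i => ?_) hgeo.summable
  · have := hm i
    have := hm j
    dsimp only at hij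
    omega
  · exact mul_nonneg (ternaryTerm_pos _).le (by positivity)
  · have := hm i
    rw [← ternaryTerm_add, Nat.add_sub_cancel' (by omega)]

/-- Subsums of `∑_{m ≥ 1} 2 / 3 ^ m` are the ternary expansions with digits `0` and `2`. -/
lemma achievementSet_ternaryTerm : achievementSet ternaryTerm = cantorSet := by
  classical
  rw [cantorSet_eq_zero_two_ofDigits]
  -- `Real.ofDigits` numbers the digits from `0`, so digit `i` belongs to index `i + 1`.
  have key : ∀ (A : Set ℕ) (d : ℕ → Fin 3), A ⊆ {n | 1 ≤ n} →
      (∀ i, d i = if i + 1 ∈ A then 2 else 0) →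
      HasSum (fun n : A => ternaryTerm n) (Real.ofDigits d) := by
    intro A d hA hd
    have h : HasSum (Real.ofDigitsTerm d) (Real.ofDigits d) := Real.summable_ofDigitsTerm.hasSum
    refine (hasSum_subtype_iff_indicator (f := ternaryTerm) (s := A)).2 ?_
    have h0 : A.indicator ternaryTerm 0 = 0 := by
      rw [Set.indicator_of_notMem]
      intro h
      exact absurd (hA h) (by simp)
    rw [← hasSum_nat_add_iff' 1]
    simp only [Finset.range_one, Finset.sum_singleton, h0, sub_zero]
    refine (congrArg (HasSum · _) (funext fun i => ?_)).mp h
    rw [Real.ofDigitsTerm, hd i]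
    by_cases hi : i + 1 ∈ A
    · simp [hi, ternaryTerm]
    · simp [hi]
  ext y
  constructor
  · rintro ⟨A, hA, hy⟩
    refine ⟨fun i => if i + 1 ∈ A then 2 else 0, fun i => ?_, (key A _ hA fun _ => rfl).unique hy⟩
    dsimp only
    split_ifs <;> decide
  · rintro ⟨d, hd, rfl⟩
    refine ⟨{n | 1 ≤ n ∧ d (n - 1) = 2}, fun n hn => hn.1, key _ d (fun n hn => hn.1) fun i => ?_⟩
    have := hd i
    simp only [mem_ofPred_eq, le_add_iff_nonneg_left, zero_le, Nat.add_sub_cancel, true_and]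
    generalize d i = t at *
    revert t
    decide

lemma achievementSet_subset_comp_perm (x : ℕ → ℝ) (e : Equiv.Perm ℕ)
    (he : ∀ n, 1 ≤ n → 1 ≤ e n) : achievementSet (x ∘ e) ⊆ achievementSet x := by
  rintro y ⟨A, hA, hy⟩
  refine ⟨e '' A, ?_, ?_⟩
  · rintro _ ⟨n, hn, rfl⟩
    exact he n (hA hn)
  · exact (e.image A).hasSum_iff.1 hy

/-- (Marchwicki–Miska) For every set `K` of positive integers such that both `K` and its
complement are infinite, there is a convergent series of positive terms whose set of
Kakeya conditions is `K` and whose achievement set is a Cantor set. -/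
theorem exists_cantor_achievement_with_kakeyaSet (K : Set ℕ)
    (hK : K ⊆ {n | 1 ≤ n}) (hKinf : K.Infinite)
    (hKcinf : ({n : ℕ | 1 ≤ n} \ K).Infinite) :
    ∃ a : ℕ → ℝ, (∀ n, 1 ≤ n → 0 < a n) ∧ Summable a ∧
      kakeyaSet a = K ∧ IsCantorSet (achievementSet a) := by
  have hinv := blockReverse_involutive K
  have hsum : Summable (ternaryTerm ∘ blockReverse K) :=
    summable_ternaryTerm.comp_injective hinv.injective
  refine ⟨ternaryTerm ∘ blockReverse K, fun n _ => ternaryTerm_pos _, hsum, ?_, ?_⟩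
  · ext n
    constructor
    · rintro ⟨hn, hlt⟩
      by_contra hnK
      have hle : ternaryTerm (blockReverse K (n + 1)) ≤
          remainder (ternaryTerm ∘ blockReverse K) n :=
        (hsum.subtype {i | n < i}).le_tsum ⟨n + 1, Nat.lt_succ_self n⟩
          fun _ _ => (ternaryTerm_pos _).le
      have hpos := ternaryTerm_pos (blockReverse K (n + 1))
      rw [Function.comp_apply, blockReverse_succ_of_notMem hKinf hn hnK, ternaryTerm_add] at hlt
      linarith
    · intro hnK
      have hn : 1 ≤ n := hK hnK
      refine ⟨hn, ?_⟩
      have hle : remainder (ternaryTerm ∘ blockReverse K) n ≤ ternaryTerm (blockReverse K n) / 2 :=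
        tsum_ternaryTerm_le (hinv.injective.comp Subtype.val_injective)
          fun i => blockReverse_lt_of_mem hKinf hn hnK i.2
      have hpos := ternaryTerm_pos (blockReverse K n)
      rw [Function.comp_apply]
      linarith
  · have hpos : ∀ n, 1 ≤ n → 1 ≤ (hinv.toPerm _) n := fun n hn => blockReverse_pos K hn
    have h1 := achievementSet_subset_comp_perm ternaryTerm (hinv.toPerm _) hpos
    have h2 := achievementSet_subset_comp_perm (ternaryTerm ∘ blockReverse K) (hinv.toPerm _) hpos
    have h3 : (ternaryTerm ∘ blockReverse K) ∘ (hinv.toPerm _) = ternaryTerm :=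
      funext fun n => congrArg ternaryTerm (hinv n)
    rw [h3] at h2
    exact ⟨Homeomorph.setCongr ((h1.antisymm h2).trans achievementSet_ternaryTerm)⟩
end

section
/- (Marchwicki–Miska) For all real numbers α, β with 0 < α ≤ β ≤ 1, there exists a sequence a : ℕ → ℝ of positive terms with ∑ₙ a(n) < ∞ such that the achievement set E(a) is a Cantorval, the lower asymptotic density of K^c(a) equals α, and the upper asymptotic density of K^c(a) equals β. -/
/-!
Given an infinite set `S` of positive integers with `1 ∈ S` and infinite complement, put
`a i = 2⁻ⁱ` for `i ∉ S` and `a i = 2⁻ⁱ - 2⁻ʲ` for `i ∈ S`, where `j` is the successor of `i` in `S`.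

* The `n`-th remainder is less than `2⁻ⁿ` (`tailTotal_lt`) and at least `2⁻ⁿ - 2⁻ʲ`, with `j` the
  first element of `S` after `n` (`le_tailTotal`). Hence the set of reversed Kakeya conditions is
  exactly `S` (`kakeya_compl`).
* Every `k ≥ 2` occurs as the exact exponent of two in the denominator of some term. Clearing
  binary digits one by one shows that finite subsums represent all dyadic rationals modulo
  `1/2`; by compactness the half-integer translates of the achievement set cover the line
  (`cover_line`), and the Baire category theorem gives nonempty interior for the achievement set
  of every tail (`interior_tailSums_nonempty`).
* The terms are decreasing, so each `k ∉ S` yields a missing value between the `k`-th remainder and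
  `a k`; thus the complement accumulates at `0` (`term_gap`).
* If `q` is the right endpoint of a gap, then the set looks to the right of `q` like `q` plus a
  tail achievement set near `0`, so both interior and complement accumulate at `q`
  (`tailSums_right`). Left endpoints follow from the symmetry of achievement sets. This makes
  the achievement set a Cantorval (`isCantorval_tailSums`).

It remains to choose `S` with lower density `α` and upper density `β`
(`exists_set_with_densities`): its counting function follows the partial sums of weights equal to
`α` and `β` alternately on the blocks `[2^2^k, 2^2^(k+1))`. The averages stay in `[α, β]` and come
close to the current weight at the end of each block. Deleting the powers of two makes the
complement infinite without changing the densities.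
-/

open Set Filter Topology MeasureTheory
open scoped Pointwise

/-- The lower asymptotic density of a set of positive integers. -/
noncomputable def lowerAsymptoticDensity (A : Set ℕ) : ℝ :=
  Filter.liminf (fun n : ℕ => (Nat.card ↥(A ∩ Set.Icc 1 n) : ℝ) / n) Filter.atTop

/-- The upper asymptotic density of a set of positive integers. -/
noncomputable def upperAsymptoticDensity (A : Set ℕ) : ℝ :=
  Filter.limsup (fun n : ℕ => (Nat.card ↥(A ∩ Set.Icc 1 n) : ℝ) / n) Filter.atTop

/-! ### Cantorvals from local information at one-sided boundary points -/

lemma interior_component_mem {A : Set ℝ} {x : ℝ} (hx : x ∈ interior A) :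
    connectedComponentIn A x ∈ intervalComponents A := by
  refine ⟨⟨x, interior_subset hx, rfl⟩, ?_⟩
  obtain ⟨ε, hε, hb⟩ := Metric.mem_nhds_iff.1 (mem_interior_iff_mem_nhds.1 hx)
  have hsub : Metric.ball x ε ⊆ connectedComponentIn A x :=
    (Metric.isConnected_ball hε).isPreconnected.subset_connectedComponentIn
      (Metric.mem_ball_self hε) hb
  intro hs
  have h1 : x + ε / 2 ∈ Metric.ball x ε := by
    rw [Metric.mem_ball, Real.dist_eq]; simp; rw [abs_of_pos (by positivity)]; linarith
  have := hs (hsub h1) (hsub (Metric.mem_ball_self hε))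
  linarith

/-- A point outside `A` lying strictly between two points of `A` belongs to a gap of `A`. -/
lemma component_mem_gaps {A : Set ℝ} {x u v : ℝ} (hx : x ∉ A) (hu : u ∈ A) (hv : v ∈ A)
    (hux : u < x) (hxv : x < v) : connectedComponentIn Aᶜ x ∈ gaps A := by
  refine ⟨⟨x, hx, rfl⟩, ?_⟩
  have hoc : OrdConnected (connectedComponentIn Aᶜ x) :=
    isPreconnected_connectedComponentIn.ordConnected
  have hxm : x ∈ connectedComponentIn Aᶜ x := mem_connectedComponentIn hx
  refine (Metric.isBounded_Icc u v).subset fun y hy => ⟨?_, ?_⟩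
  · by_contra! h
    exact connectedComponentIn_subset _ _ (hoc.out hy hxm ⟨h.le, hux.le⟩) hu
  · by_contra! h
    exact connectedComponentIn_subset _ _ (hoc.out hxm hy ⟨hxv.le, h.le⟩) hv

/-- The endpoints of a gap of a closed set belong to the set, and the gap is the open interval
between them. -/
lemma gap_structure {A : Set ℝ} (hA : IsClosed A) {G : Set ℝ} (hG : G ∈ gaps A) :
    sInf G < sSup G ∧ sInf G ∈ A ∧ sSup G ∈ A ∧ G = Ioo (sInf G) (sSup G) := by
  obtain ⟨⟨x, hx, rfl⟩, hb⟩ := hG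
  set G := connectedComponentIn Aᶜ x with hGdef
  have hxG : x ∈ G := mem_connectedComponentIn hx
  have hpre : IsPreconnected G := isPreconnected_connectedComponentIn
  have hopen : IsOpen G := hA.isOpen_compl.connectedComponentIn
  have hne : G.Nonempty := ⟨x, hxG⟩
  have hlt : ∀ y ∈ G, sInf G < y ∧ y < sSup G := by
    intro y hy
    obtain ⟨ε, hε, hbl⟩ := Metric.isOpen_iff.1 hopen y hy
    have h1 : y + ε / 2 ∈ G := hbl (by
      rw [Metric.mem_ball, Real.dist_eq]; simp; rw [abs_of_pos (by positivity)]; linarith)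
    have h2 : y - ε / 2 ∈ G := hbl (by
      rw [Metric.mem_ball, Real.dist_eq]; simp; rw [abs_of_pos (by positivity)]; linarith)
    have := le_csSup hb.bddAbove h1
    have := csInf_le hb.bddBelow h2
    constructor <;> linarith
  have key : ∀ p ∈ closure G, p ∉ G → p ∈ A := by
    intro p hp hpG
    by_contra hpA
    have hc : IsPreconnected (insert p G) :=
      hpre.subset_closure (subset_insert _ _) (insert_subset hp subset_closure)
    exact hpG (hc.subset_connectedComponentIn (mem_insert_of_mem _ hxG)
      (insert_subset hpA (connectedComponentIn_subset _ _)) (mem_insert _ _))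
  refine ⟨(hlt x hxG).1.trans (hlt x hxG).2, ?_, ?_, ?_⟩
  · exact key _ (csInf_mem_closure hne hb.bddBelow) fun h => lt_irrefl _ (hlt _ h).1
  · exact key _ (csSup_mem_closure hne hb.bddAbove) fun h => lt_irrefl _ (hlt _ h).2
  · exact Subset.antisymm (fun y hy => hlt y hy)
      (IsConnected.Ioo_csInf_csSup_subset ⟨hne, hpre⟩ hb.bddBelow hb.bddAbove)

/-- A criterion for being a Cantorval: at each point of `A` isolated in `A` from one side, both the
complement and the interior of `A` accumulate from the other side. -/
lemma isCantorval_of_local {A : Set ℝ} (hA : IsCompact A) (hne : A.Nonempty)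
    (hq : ∀ q ∈ A, ∀ η > 0, (∀ y ∈ A, q - η < y → y < q → False) → ∀ ε > 0,
      (∃ z, 0 < z ∧ z < ε ∧ q + z ∉ A) ∧ (∃ z, 0 < z ∧ z < ε ∧ q + z ∈ interior A))
    (hp : ∀ p ∈ A, ∀ η > 0, (∀ y ∈ A, p < y → y < p + η → False) → ∀ ε > 0,
      (∃ z, 0 < z ∧ z < ε ∧ p - z ∉ A) ∧ (∃ z, 0 < z ∧ z < ε ∧ p - z ∈ interior A)) :
    IsCantorval A := by
  have hmin : sInf A ∈ A := hA.sInf_mem hne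
  have hmin0 : ∀ y ∈ A, sInf A - 1 < y → y < sInf A → False := fun y hy _ h =>
    absurd (csInf_le hA.bddBelow hy) (not_le.2 h)
  refine ⟨hne, hA, ?_, ?_, ?_⟩
  · obtain ⟨-, z, hz, -, hzA⟩ := hq _ hmin 1 one_pos hmin0 1 one_pos
    obtain ⟨⟨w, hw, hwz, hwA⟩, -⟩ := hq _ hmin 1 one_pos hmin0 z hz
    exact ⟨_, component_mem_gaps hwA hmin (interior_subset hzA) (by linarith) (by linarith)⟩
  · obtain ⟨-, z, hz, -, hzA⟩ := hq _ hmin 1 one_pos hmin0 1 one_pos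
    exact ⟨_, interior_component_mem hzA⟩
  · intro G hG p hpG
    obtain ⟨hlt, hl, hr, hGe⟩ := gap_structure hA.isClosed hG
    have hdisj : ∀ y ∈ A, sInf G < y → y < sSup G → False := by
      intro y hy h1 h2
      have : y ∈ G := by rw [hGe]; exact ⟨h1, h2⟩
      obtain ⟨⟨x, hx, rfl⟩, -⟩ := hG
      exact connectedComponentIn_subset _ _ this hy
    have hη : 0 < sSup G - sInf G := sub_pos.2 hlt
    rcases hpG with rfl | hpG
    · have H := hp _ hl _ hη (fun y hy h1 h2 => hdisj y hy h1 (by linarith))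
      constructor
      · intro ε hε
        obtain ⟨-, z, hz, hzε, hzA⟩ := H ε hε
        obtain ⟨⟨w, hw, hwz, hwA⟩, -⟩ := H z hz
        have hmem : sInf G - w ∈ connectedComponentIn Aᶜ (sInf G - w) :=
          mem_connectedComponentIn hwA
        refine ⟨_, component_mem_gaps hwA (interior_subset hzA) hl (by linarith) (by linarith),
          ?_, sInf G - w, hmem, ?_⟩
        · intro h
          rw [h, hGe] at hmem
          have := hmem.1
          rw [← hGe] at this
          linarith
        · rw [Metric.mem_ball, Real.dist_eq]; simp [abs_of_pos hw]; linarith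
      · intro ε hε
        obtain ⟨-, z, hz, hzε, hzA⟩ := H ε hε
        refine ⟨_, interior_component_mem hzA, sInf G - z,
          mem_connectedComponentIn (interior_subset hzA), ?_, ?_⟩
        · rw [Metric.mem_ball, Real.dist_eq]; simp [abs_of_pos hz]; linarith
        · simp only [mem_singleton_iff]; linarith
    · rw [mem_singleton_iff] at hpG
      subst hpG
      have H := hq _ hr _ hη (fun y hy h1 h2 => hdisj y hy (by linarith) h2)
      constructor
      · intro ε hε
        obtain ⟨-, z, hz, hzε, hzA⟩ := H ε hε
        obtain ⟨⟨w, hw, hwz, hwA⟩, -⟩ := H z hz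
        have hmem : sSup G + w ∈ connectedComponentIn Aᶜ (sSup G + w) :=
          mem_connectedComponentIn hwA
        refine ⟨_, component_mem_gaps hwA hr (interior_subset hzA) (by linarith) (by linarith),
          ?_, sSup G + w, hmem, ?_⟩
        · intro h
          rw [h, hGe] at hmem
          have := hmem.2
          rw [← hGe] at this
          linarith
        · rw [Metric.mem_ball, Real.dist_eq]; simp [abs_of_pos hw]; linarith
      · intro ε hε
        obtain ⟨-, z, hz, hzε, hzA⟩ := H ε hε
        refine ⟨_, interior_component_mem hzA, sSup G + z,
          mem_connectedComponentIn (interior_subset hzA), ?_, ?_⟩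
        · rw [Metric.mem_ball, Real.dist_eq]; simp [abs_of_pos hz]; linarith
        · simp only [mem_singleton_iff]; linarith

/-! ### Achievement sets of tails -/

/-- The set of subsums of `∑_{n ≥ N} a n`. -/
def tailSums (a : ℕ → ℝ) (N : ℕ) : Set ℝ :=
  {y | ∃ A : Set ℕ, A ⊆ Ici N ∧ y = ∑' i, A.indicator a i}

/-- The sum `∑_{n ≥ N} a n`. -/
noncomputable def tailTotal (a : ℕ → ℝ) (N : ℕ) : ℝ := ∑' i, (Ici N).indicator a i

lemma achievementSet_eq_tailSums {a : ℕ → ℝ} (hs : Summable a) :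
    achievementSet a = tailSums a 1 := by
  ext y
  constructor
  · rintro ⟨A, hA, h⟩
    exact ⟨A, hA, (hasSum_subtype_iff_indicator.1 h).tsum_eq.symm⟩
  · rintro ⟨A, hA, rfl⟩
    exact ⟨A, hA, hasSum_subtype_iff_indicator.2 (hs.indicator A).hasSum⟩

lemma remainder_eq_tailTotal (a : ℕ → ℝ) (n : ℕ) : remainder a n = tailTotal a (n + 1) := by
  have h := tsum_subtype (Ici (n + 1)) a
  rw [tailTotal, ← h]
  rfl

lemma tailTotal_succ {a : ℕ → ℝ} (hs : Summable a) (N : ℕ) :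
    tailTotal a N = a N + tailTotal a (N + 1) := by
  have h : (Ici N).indicator a = fun i => ({N} : Set ℕ).indicator a i
      + (Ici (N + 1)).indicator a i := by
    funext i
    by_cases h1 : i = N
    · subst h1; simp
    · by_cases h2 : N ≤ i
      · have : N + 1 ≤ i := by omega
        simp [h1, h2, this]
      · have : ¬ N + 1 ≤ i := by omega
        simp [h1, h2, this]
  rw [tailTotal, h, (hs.indicator _).tsum_add (hs.indicator _), tailTotal]
  congr 1
  rw [tsum_eq_single N (fun i hi => by simp [hi])]
  simp

lemma tailTotal_eq_sub {a : ℕ → ℝ} (hs : Summable a) (N : ℕ) :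
    tailTotal a N = ∑' i, a i - ∑ i ∈ Finset.range N, a i := by
  induction N with
  | zero => simp [tailTotal]
  | succ N ih =>
    have := tailTotal_succ hs N
    rw [Finset.sum_range_succ]
    linarith

lemma tendsto_tailTotal {a : ℕ → ℝ} (hs : Summable a) :
    Tendsto (tailTotal a) atTop (𝓝 0) := by
  have h := hs.hasSum.tendsto_sum_nat.const_sub (∑' i, a i)
  rw [sub_self] at h
  exact h.congr fun N => (tailTotal_eq_sub hs N).symm

lemma tailSums_subset_Icc {a : ℕ → ℝ} (hs : Summable a) (hpos : ∀ n, 0 < a n) (N : ℕ) :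
    tailSums a N ⊆ Icc 0 (tailTotal a N) := by
  rintro y ⟨A, hA, rfl⟩
  constructor
  · exact tsum_nonneg fun i => indicator_nonneg (fun j _ => (hpos j).le) i
  · exact (hs.indicator _).tsum_le_tsum
      (fun i => indicator_le_indicator_of_subset hA (fun j => (hpos j).le) i) (hs.indicator _)

lemma zero_mem_tailSums (a : ℕ → ℝ) (N : ℕ) : 0 ∈ tailSums a N :=
  ⟨∅, empty_subset _, by simp⟩

lemma tailSums_anti (a : ℕ → ℝ) {M N : ℕ} (h : M ≤ N) : tailSums a N ⊆ tailSums a M := by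
  rintro y ⟨A, hA, rfl⟩
  exact ⟨A, hA.trans (Ici_subset_Ici.2 h), rfl⟩

/-- Achievement sets are symmetric about half the total. -/
lemma tailSums_symm {a : ℕ → ℝ} (hs : Summable a) {N : ℕ} {y : ℝ} (hy : y ∈ tailSums a N) :
    tailTotal a N - y ∈ tailSums a N := by
  obtain ⟨A, hA, rfl⟩ := hy
  refine ⟨Ici N \ A, sdiff_subset, ?_⟩
  rw [tailTotal, ← (hs.indicator _).tsum_sub (hs.indicator _)]
  congr 1
  funext i
  by_cases h : i ∈ A
  · have : N ≤ i := hA h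
    simp [h, this]
  · by_cases h2 : N ≤ i <;> simp [h, h2, indicator]

lemma tailSums_split {a : ℕ → ℝ} (hs : Summable a) {M N : ℕ} {y : ℝ}
    (hy : y ∈ tailSums a M) :
    ∃ F ∈ (Finset.Ico M N).powerset, ∃ t ∈ tailSums a N, y = ∑ i ∈ F, a i + t := by
  classical
  obtain ⟨A, hA, rfl⟩ := hy
  refine ⟨(Finset.Ico M N).filter (· ∈ A), by simp, _, ⟨A ∩ Ici N, inter_subset_right, rfl⟩, ?_⟩
  have h : A.indicator a = fun i =>
      (((Finset.Ico M N).filter (· ∈ A) : Finset ℕ) : Set ℕ).indicator a i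
      + (A ∩ Ici N).indicator a i := by
    funext i
    by_cases h1 : i ∈ A
    · have := hA h1
      by_cases h2 : i < N
      · simp_all [indicator]
      · simp_all [indicator]
    · simp [h1, indicator]
  rw [h, (hs.indicator _).tsum_add (hs.indicator _), ← tsum_subtype, Finset.tsum_subtype']

lemma add_mem_tailSums {a : ℕ → ℝ} (hs : Summable a) {M N : ℕ} (hMN : M ≤ N) {F : Finset ℕ}
    (hF : F ∈ (Finset.Ico M N).powerset) {t : ℝ} (ht : t ∈ tailSums a N) :
    ∑ i ∈ F, a i + t ∈ tailSums a M := by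
  classical
  obtain ⟨A, hA, rfl⟩ := ht
  rw [Finset.mem_powerset] at hF
  refine ⟨F ∪ A, ?_, ?_⟩
  · intro i hi
    rcases hi with hi | hi
    · exact (Finset.mem_Ico.1 (hF hi)).1
    · exact hMN.trans (hA hi)
  · have hd : Disjoint (F : Set ℕ) A := by
      rw [Set.disjoint_left]
      intro i hi hi'
      have := (Finset.mem_Ico.1 (hF hi)).2
      have : N ≤ i := hA hi'
      omega
    rw [indicator_union_of_disjoint hd, (hs.indicator _).tsum_add (hs.indicator _),
      ← tsum_subtype (F : Set ℕ), Finset.tsum_subtype']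

lemma isCompact_tailSums {a : ℕ → ℝ} (hs : Summable a) (hpos : ∀ n, 0 < a n) (N : ℕ) :
    IsCompact (tailSums a N) := by
  classical
  -- The subsums are the continuous image of the Cantor space `ℕ → Bool`.
  have hc : Continuous fun x : ℕ → Bool =>
      ∑' i, if x i = true ∧ N ≤ i then a i else 0 := by
    refine continuous_tsum (u := a) (fun i => ?_) hs fun i x => ?_
    · have h : Continuous fun b : Bool => if b = true ∧ N ≤ i then a i else (0 : ℝ) :=
        continuous_of_discreteTopology
      exact h.comp (continuous_apply i)
    · split_ifs
      · rw [Real.norm_eq_abs, abs_of_pos (hpos i)]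
      · simpa using (hpos i).le
  convert isCompact_range hc using 1
  ext y
  constructor
  · rintro ⟨A, hA, rfl⟩
    refine ⟨fun i => decide (i ∈ A), ?_⟩
    refine tsum_congr fun i => ?_
    by_cases h : i ∈ A
    · have : N ≤ i := hA h
      simp [h, this]
    · simp [h]
  · rintro ⟨x, rfl⟩
    refine ⟨{i | x i = true ∧ N ≤ i}, fun i hi => hi.2, ?_⟩
    exact tsum_congr fun i => by simp [indicator]

/-- At a point `q` of the achievement set isolated from the left, every small enough tail enters
`q` trivially, so the set coincides with `q` plus a tail achievement set to the right of `q`;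
there both the interior and the complement accumulate at `q`. -/
lemma tailSums_right {a : ℕ → ℝ} (hs : Summable a) (hpos : ∀ n, 0 < a n)
    (hInterior : ∀ N, (interior (tailSums a N)).Nonempty)
    (hgap : ∀ δ > 0, ∃ z, 0 < z ∧ z < δ ∧ z ∉ tailSums a 1)
    {q η : ℝ} (hq : q ∈ tailSums a 1) (hη : 0 < η)
    (hiso : ∀ y ∈ tailSums a 1, q - η < y → y < q → False) {ε : ℝ} (hε : 0 < ε) :
    (∃ z, 0 < z ∧ z < ε ∧ q + z ∉ tailSums a 1) ∧
      (∃ z, 0 < z ∧ z < ε ∧ q + z ∈ interior (tailSums a 1)) := by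
  obtain ⟨n, hn, hn1⟩ := (((tendsto_tailTotal hs).eventually_lt_const
    (lt_min hη hε)).and (eventually_ge_atTop 1)).exists
  have hnη : tailTotal a n < η := hn.trans_le (min_le_left _ _)
  have hnε : tailTotal a n < ε := hn.trans_le (min_le_right _ _)
  obtain ⟨F, hF, t, ht, hqe⟩ := tailSums_split hs (N := n) hq
  have hfin : ∀ F' ∈ (Finset.Ico 1 n).powerset, ∑ i ∈ F', a i ∈ tailSums a 1 := fun F' hF' => by
    simpa using add_mem_tailSums hs hn1 hF' (zero_mem_tailSums a n)
  have htI := tailSums_subset_Icc hs hpos n ht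
  have hqF : ∑ i ∈ F, a i = q := by
    by_contra hne
    refine hiso _ (hfin F hF) ?_ (lt_of_le_of_ne ?_ hne)
    · linarith [htI.2]
    · linarith [htI.1]
  constructor
  · set B : Finset ℝ := ((Finset.Ico 1 n).powerset.image fun F' => ∑ i ∈ F', a i).erase q
    have hBo : IsOpen ((B : Set ℝ)ᶜ) := B.finite_toSet.isClosed.isOpen_compl
    obtain ⟨δ, hδ, hball⟩ := Metric.isOpen_iff.1 hBo q (by simp [B])
    obtain ⟨z, hz, hzlt, hzE⟩ := hgap (min δ ε) (lt_min hδ hε)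
    refine ⟨z, hz, hzlt.trans_le (min_le_right _ _), fun hmem => ?_⟩
    have hzδ : z < δ := hzlt.trans_le (min_le_left _ _)
    obtain ⟨F', hF', t', ht', he⟩ := tailSums_split hs (N := n) hmem
    have ht'I := tailSums_subset_Icc hs hpos n ht'
    rcases lt_trichotomy (∑ i ∈ F', a i) q with h | h | h
    · exact hiso _ (hfin F' hF') (by linarith [ht'I.2]) h
    · have : z = t' := by linarith
      exact hzE (this ▸ tailSums_anti a hn1 ht')
    · refine hball (a := ∑ i ∈ F', a i) ?_ ?_
      · rw [Metric.mem_ball, Real.dist_eq, abs_of_pos (by linarith)]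
        linarith [ht'I.1]
      · simp only [B, Finset.coe_erase, Finset.coe_image, Set.mem_sdiff, mem_singleton_iff]
        exact ⟨⟨F', hF', rfl⟩, h.ne'⟩
  · obtain ⟨x, hx⟩ := hInterior n
    have hxI := interior_mono (tailSums_subset_Icc hs hpos n) hx
    rw [interior_Icc] at hxI
    refine ⟨x, hxI.1, hxI.2.trans hnε, ?_⟩
    have hsub : tailSums a n ⊆ (Homeomorph.addLeft q) ⁻¹' tailSums a 1 := by
      intro t ht
      simp only [mem_preimage, Homeomorph.coe_addLeft]
      rw [← hqF]
      exact add_mem_tailSums hs hn1 hF ht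
    have := interior_mono hsub hx
    rw [← Homeomorph.preimage_interior] at this
    exact this

lemma isCantorval_tailSums {a : ℕ → ℝ} (hs : Summable a) (hpos : ∀ n, 0 < a n)
    (hInterior : ∀ N, (interior (tailSums a N)).Nonempty)
    (hgap : ∀ δ > 0, ∃ z, 0 < z ∧ z < δ ∧ z ∉ tailSums a 1) :
    IsCantorval (tailSums a 1) := by
  refine isCantorval_of_local (isCompact_tailSums hs hpos 1) ⟨0, zero_mem_tailSums a 1⟩
    (fun q hq η hη hiso ε hε => tailSums_right hs hpos hInterior hgap hq hη hiso hε) ?_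
  intro p hp η hη hiso ε hε
  set T := tailTotal a 1
  obtain ⟨⟨z, hz, hzε, hzE⟩, ⟨w, hw, hwε, hwE⟩⟩ :=
    tailSums_right hs hpos hInterior hgap (tailSums_symm hs hp) hη
    (fun y hy h1 h2 => hiso _ (tailSums_symm hs hy) (by linarith) (by linarith)) hε
  refine ⟨⟨z, hz, hzε, fun h => hzE ?_⟩, ⟨w, hw, hwε, ?_⟩⟩
  · convert tailSums_symm hs h using 1
    ring
  · have hpre : (Homeomorph.subLeft T) ⁻¹' tailSums a 1 = tailSums a 1 := by
      ext y
      constructor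
      · intro h
        have := tailSums_symm hs (show T - y ∈ tailSums a 1 from h)
        simpa [T] using this
      · intro h
        exact tailSums_symm hs h
    rw [← hpre, ← Homeomorph.preimage_interior]
    simp only [mem_preimage, Homeomorph.coe_subLeft]
    convert hwE using 1
    ring

/-! ### The series attached to an infinite set of indices -/

/-- The smallest element of `S` exceeding `i` (junk value `0` if there is none). -/
noncomputable def nextElt (S : Set ℕ) (i : ℕ) : ℕ := sInf {j | j ∈ S ∧ i < j}

/-- The series: `2⁻ⁱ` for `i ∉ S`, and `2⁻ⁱ - 2⁻ʲ` for `i ∈ S`, where `j` is the element of `S`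
following `i`. -/
noncomputable def term (S : Set ℕ) (i : ℕ) : ℝ :=
  (1 / 2) ^ i - S.indicator (fun i => (1 / 2 : ℝ) ^ nextElt S i) i

open Classical in
/-- The exponent of two in the denominator of `term S i`. -/
noncomputable def denomExp (S : Set ℕ) (i : ℕ) : ℕ := if i ∈ S then nextElt S i else i

section

variable {S : Set ℕ}

lemma nextElt_spec (hS : S.Infinite) (i : ℕ) : nextElt S i ∈ S ∧ i < nextElt S i :=
  Nat.sInf_mem (s := {j | j ∈ S ∧ i < j}) (hS.exists_gt i)

lemma nextElt_le {i j : ℕ} (hj : j ∈ S) (hij : i < j) : nextElt S i ≤ j :=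
  Nat.sInf_le (s := {j | j ∈ S ∧ i < j}) ⟨hj, hij⟩

lemma nextElt_of_succ_mem (hS : S.Infinite) {n : ℕ} (h : n + 1 ∈ S) : nextElt S n = n + 1 :=
  le_antisymm (nextElt_le h (Nat.lt_succ_self n)) (nextElt_spec hS n).2

lemma nextElt_of_succ_notMem (hS : S.Infinite) {n : ℕ} (h : n + 1 ∉ S) :
    nextElt S n = nextElt S (n + 1) := by
  obtain ⟨h1, h2⟩ := nextElt_spec hS n
  obtain ⟨h3, h4⟩ := nextElt_spec hS (n + 1)
  refine le_antisymm (nextElt_le h3 (by omega)) (nextElt_le h1 ?_)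
  have : nextElt S n ≠ n + 1 := fun he => h (he ▸ h1)
  omega

lemma term_of_mem {i : ℕ} (h : i ∈ S) : term S i = (1 / 2) ^ i - (1 / 2) ^ nextElt S i := by
  rw [term, indicator_of_mem h]

lemma term_of_notMem {i : ℕ} (h : i ∉ S) : term S i = (1 / 2) ^ i := by
  rw [term, indicator_of_notMem h, sub_zero]

lemma half_pow_nextElt_le (hS : S.Infinite) (i : ℕ) :
    (1 / 2 : ℝ) ^ nextElt S i ≤ (1 / 2) ^ (i + 1) :=
  pow_le_pow_of_le_one (by norm_num) (by norm_num) (nextElt_spec hS i).2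

lemma term_ge (hS : S.Infinite) (i : ℕ) : (1 / 2 : ℝ) ^ (i + 1) ≤ term S i := by
  by_cases h : i ∈ S
  · rw [term_of_mem h]
    have := half_pow_nextElt_le hS i
    have h2 : (1 / 2 : ℝ) ^ (i + 1) = (1 / 2) ^ i * (1 / 2) := pow_succ _ _
    linarith
  · rw [term_of_notMem h]
    exact pow_le_pow_of_le_one (by norm_num) (by norm_num) (Nat.le_succ i)

lemma term_le (i : ℕ) : term S i ≤ (1 / 2 : ℝ) ^ i := by
  by_cases h : i ∈ S
  · rw [term_of_mem h]
    have : (0 : ℝ) < (1 / 2) ^ nextElt S i := by positivity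
    linarith
  · rw [term_of_notMem h]

lemma term_pos (hS : S.Infinite) (i : ℕ) : 0 < term S i :=
  lt_of_lt_of_le (by positivity) (term_ge hS i)

lemma summable_term (hS : S.Infinite) : Summable (term S) :=
  Summable.of_nonneg_of_le (fun i => (term_pos hS i).le) term_le
    (summable_geometric_of_lt_one (by norm_num) (by norm_num))

lemma term_anti (hS : S.Infinite) {i k : ℕ} (h : i ≤ k) : term S k ≤ term S i := by
  rcases h.eq_or_lt with rfl | h
  · exact le_rfl
  · exact (term_le k).trans ((pow_le_pow_of_le_one (by norm_num) (by norm_num) h).trans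
      (term_ge hS i))

/-- `2⁻ⁿ - 2⁻ʲ`, with `j` the first element of `S` after `n`, bounds the `n`-th remainder from
below, because its decrement at each step is at most the corresponding term. -/
lemma le_tailTotal (hS : S.Infinite) (n : ℕ) :
    (1 / 2 : ℝ) ^ n - (1 / 2) ^ nextElt S n ≤ tailTotal (term S) (n + 1) := by
  have hs := summable_term hS
  have hanti : Antitone fun n => tailTotal (term S) (n + 1) -
      ((1 / 2 : ℝ) ^ n - (1 / 2) ^ nextElt S n) := by
    refine antitone_nat_of_succ_le fun n => ?_
    have h1 := tailTotal_succ hs (n + 1)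
    have h2 : (1 / 2 : ℝ) ^ (n + 1) = (1 / 2) ^ n * (1 / 2) := pow_succ _ _
    have h3 := half_pow_nextElt_le hS (n + 1)
    have h4 : (1 / 2 : ℝ) ^ (n + 1 + 1) = (1 / 2) ^ (n + 1) * (1 / 2) := pow_succ _ _
    by_cases h : n + 1 ∈ S
    · rw [term_of_mem h] at h1
      rw [nextElt_of_succ_mem hS h]
      linarith
    · rw [term_of_notMem h] at h1
      rw [nextElt_of_succ_notMem hS h]
      linarith
  have hp : Tendsto (fun n : ℕ => (1 / 2 : ℝ) ^ n) atTop (𝓝 0) :=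
    tendsto_pow_atTop_nhds_zero_of_lt_one (by norm_num) (by norm_num)
  have hnx : Tendsto (nextElt S) atTop atTop :=
    tendsto_atTop_mono (fun n => (nextElt_spec hS n).2.le) tendsto_id
  have hlim := ((tendsto_add_atTop_iff_nat 1).2 (tendsto_tailTotal hs)).sub
    (hp.sub (hp.comp hnx))
  simp only [sub_zero] at hlim
  have := hanti.le_of_tendsto hlim n
  linarith

lemma tailTotal_lt (hS : S.Infinite) (n : ℕ) :
    tailTotal (term S) (n + 1) < (1 / 2 : ℝ) ^ n := by
  have hs := summable_term hS
  have hstep : ∀ n, (1 / 2 : ℝ) ^ n - tailTotal (term S) (n + 1) =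
      (1 / 2 : ℝ) ^ (n + 1) - tailTotal (term S) (n + 1 + 1) +
        ((1 / 2 : ℝ) ^ (n + 1) - term S (n + 1)) := by
    intro n
    rw [tailTotal_succ hs (n + 1), pow_succ]
    ring
  have hanti : Antitone fun n => (1 / 2 : ℝ) ^ n - tailTotal (term S) (n + 1) := by
    refine antitone_nat_of_succ_le fun n => ?_
    rw [hstep n]
    linarith [term_le (S := S) (n + 1)]
  have hp : Tendsto (fun n : ℕ => (1 / 2 : ℝ) ^ n) atTop (𝓝 0) :=
    tendsto_pow_atTop_nhds_zero_of_lt_one (by norm_num) (by norm_num)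
  have hlim := hp.sub ((tendsto_add_atTop_iff_nat 1).2 (tendsto_tailTotal hs))
  simp only [sub_zero] at hlim
  -- The decrease from `m` to `m + 1` is strict because `m + 1 ∈ S`.
  obtain ⟨m, hm⟩ : ∃ m, nextElt S n = m + 1 :=
    Nat.exists_eq_succ_of_ne_zero (by have := (nextElt_spec hS n).2; omega)
  have hmS : m + 1 ∈ S := hm ▸ (nextElt_spec hS n).1
  have hnm : n ≤ m := by have := (nextElt_spec hS n).2; omega
  have h1 := hanti hnm
  have h2 := hstep m
  have h3 := hanti.le_of_tendsto hlim (m + 1)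
  rw [term_of_mem hmS] at h2
  have : (0 : ℝ) < (1 / 2) ^ nextElt S (m + 1) := by positivity
  simp only at h1 h3
  linarith

lemma kakeya_compl (hS : S.Infinite) (h0 : 0 ∉ S) :
    {n : ℕ | 1 ≤ n} \ kakeyaSet (term S) = S := by
  ext n
  simp only [kakeyaSet, Set.mem_sdiff, mem_ofPred_eq, not_and, not_lt, remainder_eq_tailTotal]
  constructor
  · rintro ⟨h1, h2⟩
    by_contra h
    have h3 := h2 h1
    rw [term_of_notMem h] at h3
    exact absurd (tailTotal_lt hS n) (not_lt.2 h3)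
  · intro h
    refine ⟨Nat.one_le_iff_ne_zero.2 fun hn => h0 (hn ▸ h), fun _ => ?_⟩
    rw [term_of_mem h]
    exact le_tailTotal hS n

/-- There are arbitrarily small missing values: every Kakeya index `k` leaves the interval between the
`k`-th remainder and the `k`-th term free of subsums. -/
lemma term_gap (hS : S.Infinite) (hSc : Sᶜ.Infinite) {δ : ℝ} (hδ : 0 < δ) :
    ∃ z, 0 < z ∧ z < δ ∧ z ∉ tailSums (term S) 1 := by
  have hs := summable_term hS
  obtain ⟨N, hN⟩ := exists_pow_lt_of_lt_one hδ (by norm_num : (1 / 2 : ℝ) < 1)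
  obtain ⟨k, hkS, hk⟩ := hSc.exists_gt N
  have hkδ : (1 / 2 : ℝ) ^ k < δ :=
    (pow_le_pow_of_le_one (by norm_num) (by norm_num) hk.le).trans_lt hN
  have hlt := tailTotal_lt hS k
  have htk : term S k = (1 / 2) ^ k := term_of_notMem hkS
  have hpk : (0 : ℝ) < (1 / 2) ^ k := by positivity
  have hT0 : 0 ≤ tailTotal (term S) (k + 1) :=
    (tailSums_subset_Icc hs (term_pos hS) _ (zero_mem_tailSums _ _)).2
  refine ⟨(tailTotal (term S) (k + 1) + (1 / 2) ^ k) / 2, by linarith, by linarith, ?_⟩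
  rintro ⟨A, hA, hz⟩
  by_cases h : A ⊆ Ici (k + 1)
  · have := (tailSums_subset_Icc hs (term_pos hS) (k + 1) ⟨A, h, rfl⟩).2
    linarith
  · obtain ⟨i, hiA, hi⟩ := not_subset.1 h
    have hik : i ≤ k := by
      simp only [mem_Ici, not_le] at hi
      omega
    have h1 := (hs.indicator A).le_tsum i
      (fun j _ => indicator_nonneg (fun j _ => (term_pos hS j).le) j)
    rw [indicator_of_mem hiA] at h1
    have h2 := term_anti hS hik
    linarith

/-- Each `k ≥ 2` is the exponent of the exact power of two in the denominator of some term: of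
`2⁻ᵏ` itself if `k ∉ S`, otherwise of the term indexed by the predecessor of `k` in `S`. -/
lemma exists_term_with_denominator (hS : S.Infinite) (h1 : 1 ∈ S) (n : ℕ) :
    ∃ i, 1 ≤ i ∧ denomExp S i = n + 2 ∧
      ∃ u : ℤ, term S i = (2 * u + 1) / 2 ^ (n + 2) := by
  classical
  by_cases h : n + 2 ∈ S
  · set i := Nat.findGreatest (· ∈ S) (n + 1) with hi
    have hiS : i ∈ S := Nat.findGreatest_spec (P := (· ∈ S)) (by omega : 1 ≤ n + 1) h1
    have hile : i ≤ n + 1 := Nat.findGreatest_le _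
    have hi1 : 1 ≤ i := Nat.le_findGreatest (by omega) h1
    have hnext : nextElt S i = n + 2 := by
      refine le_antisymm (nextElt_le h (by omega)) ?_
      by_contra! hlt
      obtain ⟨h2, h3⟩ := nextElt_spec hS i
      have : nextElt S i ≤ i := Nat.le_findGreatest (by omega) h2
      omega
    refine ⟨i, hi1, by rw [denomExp, if_pos hiS, hnext], 2 ^ (n + 1 - i) - 1, ?_⟩
    rw [term_of_mem hiS, hnext]
    obtain ⟨d, hd⟩ := Nat.exists_eq_add_of_le hile
    have hd' : n + 1 - i = d := by omega
    have hd2 : n + 2 = i + d + 1 := by omega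
    rw [hd', hd2]
    push_cast
    simp only [one_div, inv_pow, pow_succ, pow_add]
    field_simp
    ring
  · refine ⟨n + 2, by omega, by rw [denomExp, if_neg h], 0, ?_⟩
    rw [term_of_notMem h]
    simp

/-- Clearing binary digits one at a time, every dyadic rational becomes a half-integer after
subtracting finitely many distinct terms. -/
lemma dyadic_mem (hS : S.Infinite) (h1 : 1 ∈ S) (n : ℕ) : ∀ m : ℤ, ∃ F : Finset ℕ,
    (∀ i ∈ F, 1 ≤ i ∧ denomExp S i ≤ n + 1) ∧
      ∃ z : ℤ, (m : ℝ) / 2 ^ (n + 1) = ∑ i ∈ F, term S i + z / 2 := by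
  classical
  induction n with
  | zero => exact fun m => ⟨∅, by simp, m, by simp⟩
  | succ n ih =>
    intro m
    rcases Int.even_or_odd' m with ⟨m', hm | hm⟩
    · obtain ⟨F, hF, z, hz⟩ := ih m'
      refine ⟨F, fun i hi => ⟨(hF i hi).1, (hF i hi).2.trans (by omega)⟩, z, ?_⟩
      rw [← hz, hm]
      push_cast
      rw [pow_succ 2 (n + 1)]
      field_simp
    · obtain ⟨i, hi1, hiv, u, hu⟩ := exists_term_with_denominator hS h1 n
      obtain ⟨F, hF, z, hz⟩ := ih (m' - u)
      have hiF : i ∉ F := fun hiF => by have := (hF i hiF).2; omega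
      refine ⟨insert i F, ?_, z, ?_⟩
      · intro j hj
        rcases Finset.mem_insert.1 hj with rfl | hj
        · exact ⟨hi1, hiv.le⟩
        · exact ⟨(hF j hj).1, (hF j hj).2.trans (by omega)⟩
      · rw [Finset.sum_insert hiF, add_assoc (term S i), ← hz, hu, hm]
        push_cast
        rw [show n + 1 + 1 = n + 2 from rfl, pow_succ 2 (n + 1)]
        field_simp
        ring

lemma finset_sum_mem_tailSums (hS : S.Infinite) {F : Finset ℕ} (hF : ∀ i ∈ F, 1 ≤ i) :
    ∑ i ∈ F, term S i ∈ tailSums (term S) 1 := by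
  have h := add_mem_tailSums (summable_term hS) (M := 1) (N := F.sup id + 1) (by omega) (F := F)
    (Finset.mem_powerset.2 fun i hi => Finset.mem_Ico.2
      ⟨hF i hi, Nat.lt_succ_of_le (Finset.le_sup (f := id) hi)⟩)
    (zero_mem_tailSums _ _)
  simpa using h

/-- The half-integer translates of the achievement set cover the line. -/
lemma cover_line (hS : S.Infinite) (h1 : 1 ∈ S) (y : ℝ) :
    ∃ e ∈ tailSums (term S) 1, ∃ z : ℤ, y = e + z / 2 := by
  have hK := isCompact_tailSums (summable_term hS) (term_pos hS) 1
  have hZ : IsClosed (range fun z : ℤ => (z : ℝ) / 2) := by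
    have h := Int.isClosedEmbedding_coe_real.isClosed_range.smul_of_ne_zero
      (c := (1 / 2 : ℝ)) (by norm_num)
    convert h using 1
    ext x
    simp only [mem_range, Set.mem_smul_set, smul_eq_mul]
    constructor
    · rintro ⟨z, rfl⟩
      exact ⟨z, ⟨z, rfl⟩, by ring⟩
    · rintro ⟨_, ⟨z, rfl⟩, rfl⟩
      exact ⟨z, by ring⟩
  have hcl : IsClosed (tailSums (term S) 1 + range fun z : ℤ => (z : ℝ) / 2) :=
    hZ.add_left_of_isCompact hK
  have hy : y ∈ tailSums (term S) 1 + range fun z : ℤ => (z : ℝ) / 2 := by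
    rw [← hcl.closure_eq, Metric.mem_closure_iff]
    intro ε hε
    obtain ⟨n, hn⟩ := exists_pow_lt_of_lt_one hε (by norm_num : (1 / 2 : ℝ) < 1)
    obtain ⟨F, hF, z, hz⟩ := dyadic_mem hS h1 n ⌊y * 2 ^ (n + 1)⌋
    refine ⟨_, Set.add_mem_add (finset_sum_mem_tailSums hS fun i hi => (hF i hi).1)
      (mem_range_self z), ?_⟩
    rw [← hz, Real.dist_eq]
    have hp : (0 : ℝ) < 2 ^ (n + 1) := by positivity
    have h2 := Int.floor_le (y * 2 ^ (n + 1))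
    have h3 := Int.lt_floor_add_one (y * 2 ^ (n + 1))
    have h4 : (⌊y * 2 ^ (n + 1)⌋ : ℝ) / 2 ^ (n + 1) ≤ y := (div_le_iff₀ hp).2 h2
    have h5 : y < (⌊y * 2 ^ (n + 1)⌋ + 1 : ℝ) / 2 ^ (n + 1) := (lt_div_iff₀ hp).2 h3
    have h6 : (1 : ℝ) / 2 ^ (n + 1) ≤ (1 / 2) ^ n := by
      rw [← one_div_pow]
      exact pow_le_pow_of_le_one (by norm_num) (by norm_num) (Nat.le_succ n)
    rw [add_div] at h5
    rw [abs_of_nonneg (by linarith)]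
    linarith
  obtain ⟨e, he, _, ⟨z, rfl⟩, rfl⟩ := Set.mem_add.1 hy
  exact ⟨e, he, z, rfl⟩

/-- Countably many translates of each tail achievement set cover the line, so by the Baire category
theorem it has nonempty interior. -/
lemma interior_tailSums_nonempty (hS : S.Infinite) (h1 : 1 ∈ S) (N : ℕ) :
    (interior (tailSums (term S) N)).Nonempty := by
  have hs := summable_term hS
  have hcl := (isCompact_tailSums hs (term_pos hS) N).isClosed
  let c : Finset ℕ × ℤ → ℝ := fun p => ∑ i ∈ p.1, term S i + p.2 / 2
  have hcl' : ∀ p, IsClosed ((Homeomorph.subRight (c p)) ⁻¹' tailSums (term S) N) := fun p =>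
    hcl.preimage (Homeomorph.subRight (c p)).continuous
  have hU : ⋃ p, (Homeomorph.subRight (c p)) ⁻¹' tailSums (term S) N = univ := by
    refine eq_univ_of_forall fun y => ?_
    obtain ⟨e, he, z, rfl⟩ := cover_line hS h1 y
    obtain ⟨F, -, t, ht, rfl⟩ := tailSums_split hs (N := N) he
    refine mem_iUnion.2 ⟨(F, z), ?_⟩
    simp only [mem_preimage, Homeomorph.coe_subRight, c]
    convert ht using 1
    ring
  obtain ⟨p, x, hx⟩ := nonempty_interior_of_iUnion_of_closed hcl' hU
  rw [← Homeomorph.preimage_interior] at hx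
  exact ⟨_, hx⟩

end

/-! ### Sets with prescribed lower and upper densities -/

lemma ncard_inter_Icc_succ (S : Set ℕ) (n : ℕ) :
    (n + 1 ∈ S → (S ∩ Icc 1 (n + 1)).ncard = (S ∩ Icc 1 n).ncard + 1) ∧
      (n + 1 ∉ S → (S ∩ Icc 1 (n + 1)).ncard = (S ∩ Icc 1 n).ncard) := by
  constructor
  · intro h
    have : S ∩ Icc 1 (n + 1) = insert (n + 1) (S ∩ Icc 1 n) := by
      ext i
      simp only [mem_inter_iff, mem_Icc, mem_insert_iff]
      constructor
      · rintro ⟨h1, h2, h3⟩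
        by_cases hi : i = n + 1
        · exact Or.inl hi
        · exact Or.inr ⟨h1, h2, by omega⟩
      · rintro (rfl | ⟨h1, h2, h3⟩)
        · exact ⟨h, by omega, le_rfl⟩
        · exact ⟨h1, h2, by omega⟩
    rw [this, ncard_insert_of_notMem (by simp) ((finite_Icc 1 n).inter_of_right S)]
  · intro h
    congr 1
    ext i
    simp only [mem_inter_iff, mem_Icc]
    constructor
    · rintro ⟨h1, h2, h3⟩
      have : i ≠ n + 1 := fun hi => h (hi ▸ h1)
      exact ⟨h1, h2, by omega⟩
    · rintro ⟨h1, h2, h3⟩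
      exact ⟨h1, h2, by omega⟩

/-- A set whose counting function follows the partial sums of `w` up to a logarithmic error: the
indices at which the rounded-up partial sum increases, without the powers of two (so that
the complement is infinite). -/
lemma exists_set_of_weights (w : ℕ → ℝ) (h0 : ∀ i, 0 < w i) (h1 : ∀ i, w i ≤ 1) :
    ∃ S : Set ℕ, 0 ∉ S ∧ 1 ∈ S ∧ Sᶜ.Infinite ∧ ∀ n,
      |((S ∩ Icc 1 n).ncard : ℝ) - ∑ i ∈ Finset.range n, w (i + 1)| ≤ 1 + Nat.log 2 n := by
  set f : ℕ → ℝ := fun n => ∑ i ∈ Finset.range n, w (i + 1) with hf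
  have hfs : ∀ n, f (n + 1) = f n + w (n + 1) := fun n => Finset.sum_range_succ _ _
  have hf0 : ∀ n, 0 ≤ f n := fun n => Finset.sum_nonneg fun i _ => (h0 _).le
  set S₀ : Set ℕ := {n | ⌈f (n - 1)⌉₊ < ⌈f n⌉₊} with hS₀
  set P : Set ℕ := range fun k : ℕ => 2 ^ (k + 1) with hP
  have hmem : ∀ n, n + 1 ∈ S₀ ↔ ⌈f n⌉₊ < ⌈f (n + 1)⌉₊ := fun n => Iff.rfl
  have hcount : ∀ n, (S₀ ∩ Icc 1 n).ncard = ⌈f n⌉₊ := by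
    intro n
    induction n with
    | zero => simp [hf]
    | succ n ih =>
      have hle : ⌈f n⌉₊ ≤ ⌈f (n + 1)⌉₊ := Nat.ceil_mono (by rw [hfs]; linarith [h0 (n + 1)])
      have hle' : ⌈f (n + 1)⌉₊ ≤ ⌈f n⌉₊ + 1 := by
        rw [Nat.ceil_le, hfs]
        push_cast
        linarith [h1 (n + 1), Nat.le_ceil (f n)]
      by_cases h : n + 1 ∈ S₀
      · rw [(ncard_inter_Icc_succ S₀ n).1 h, ih]
        have := (hmem n).1 h
        omega
      · rw [(ncard_inter_Icc_succ S₀ n).2 h, ih]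
        have := (hmem n).not.1 h
        omega
  have hPcount : ∀ n, (P ∩ Icc 1 n).ncard ≤ Nat.log 2 n := by
    intro n
    have hsub : P ∩ Icc 1 n ⊆ ((Finset.Icc 1 (Nat.log 2 n)).image fun k => 2 ^ k : Finset ℕ) := by
      rintro _ ⟨⟨k, rfl⟩, -, hk⟩
      simp only [Finset.coe_image, mem_image, Finset.mem_coe, Finset.mem_Icc]
      exact ⟨k + 1, ⟨by omega, Nat.le_log_of_pow_le (by norm_num) hk⟩, rfl⟩
    refine (ncard_le_ncard hsub (Finset.finite_toSet _)).trans ?_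
    rw [ncard_coe_finset]
    refine Finset.card_image_le.trans ?_
    simp
  refine ⟨S₀ \ P, ?_, ?_, ?_, ?_⟩
  · rintro ⟨h, -⟩
    exact lt_irrefl _ (show ⌈f (0 - 1)⌉₊ < ⌈f 0⌉₊ from h)
  · refine ⟨?_, ?_⟩
    · show ⌈f 0⌉₊ < ⌈f (0 + 1)⌉₊
      rw [hfs]
      simp [hf, h0]
    · rintro ⟨k, hk⟩
      have h2 : 2 ≤ 2 ^ (k + 1) := by
        rw [pow_succ]; have := Nat.one_le_two_pow (n := k); omega
      simp only at hk
      omega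
  · refine Infinite.mono (s := P) (fun i hi hi' => hi'.2 hi) ?_
    refine infinite_range_of_injective fun i j hij => ?_
    have := Nat.pow_right_injective le_rfl hij
    omega
  · intro n
    have hfin : ∀ B : Set ℕ, (B ∩ Icc 1 n).Finite := fun B => (finite_Icc 1 n).inter_of_right B
    have hA : ((S₀ \ P) ∩ Icc 1 n).ncard ≤ ⌈f n⌉₊ := by
      rw [← hcount]
      exact ncard_le_ncard (inter_subset_inter_left _ sdiff_subset) (hfin _)
    have hB : ⌈f n⌉₊ ≤ ((S₀ \ P) ∩ Icc 1 n).ncard + Nat.log 2 n := by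
      rw [← hcount]
      have hsub : S₀ ∩ Icc 1 n ⊆ ((S₀ \ P) ∩ Icc 1 n) ∪ (P ∩ Icc 1 n) := by
        rintro i ⟨hi, hi'⟩
        by_cases h : i ∈ P
        · exact Or.inr ⟨h, hi'⟩
        · exact Or.inl ⟨⟨hi, h⟩, hi'⟩
      have h2 := ncard_le_ncard hsub ((hfin _).union (hfin _))
      have h3 := ncard_union_le ((S₀ \ P) ∩ Icc 1 n) (P ∩ Icc 1 n)
      have h4 := hPcount n
      omega
    have hA' : (((S₀ \ P) ∩ Icc 1 n).ncard : ℝ) ≤ ⌈f n⌉₊ := by exact_mod_cast hA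
    have hB' : (⌈f n⌉₊ : ℝ) ≤ ((S₀ \ P) ∩ Icc 1 n).ncard + Nat.log 2 n := by exact_mod_cast hB
    have h2 := Nat.le_ceil (f n)
    have h3 := Nat.ceil_lt_add_one (hf0 n)
    have h4 : (0 : ℝ) ≤ Nat.log 2 n := Nat.cast_nonneg _
    rw [abs_le]
    constructor <;> linarith

/-- Weights alternating between `α` and `β` on the blocks `[2^2^k, 2^2^(k+1))`. -/
noncomputable def blockWeight (α β : ℝ) (i : ℕ) : ℝ :=
  if Even (Nat.log 2 (Nat.log 2 i)) then α else β

/-- At the end of a block the average weight is close to the weight on that block, since the block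
is much longer than everything before it. -/
lemma blockWeight_average {α β : ℝ} (h0 : 0 < α) (hαβ : α ≤ β) (h1 : β ≤ 1) {γ : ℝ} (k : ℕ)
    (hγ : γ = if Even k then α else β) :
    |(∑ i ∈ Finset.range ((2 ^ 2 ^ k) ^ 2 - 1), blockWeight α β (i + 1)) /
      (((2 ^ 2 ^ k) ^ 2 - 1 : ℕ) : ℝ) - γ| ≤ 2 / 2 ^ 2 ^ k := by
  set M : ℕ := 2 ^ 2 ^ k with hM
  set n : ℕ := M ^ 2 - 1 with hn
  have hM2 : 2 ≤ M := by
    calc 2 = 2 ^ 1 := by norm_num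
      _ ≤ 2 ^ 2 ^ k := Nat.pow_le_pow_right (by norm_num) Nat.one_le_two_pow
  have hMM : M * 2 ≤ M ^ 2 := by rw [pow_two]; exact Nat.mul_le_mul_left _ hM2
  have hn1 : n + 1 = M ^ 2 := by omega
  have hnpos : (0 : ℝ) < n := by
    have : 0 < n := by omega
    exact_mod_cast this
  have hblock : ∀ i, M ≤ i → i ≤ n → blockWeight α β i = γ := by
    intro i hi1 hi2
    have h2 : 2 ^ k ≤ Nat.log 2 i := Nat.le_log_of_pow_le (by norm_num) hi1
    have h3 : Nat.log 2 i < 2 ^ (k + 1) := by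
      refine Nat.log_lt_of_lt_pow (by omega) ?_
      rw [pow_succ 2 k, pow_mul, ← hM]
      omega
    have h4 : Nat.log 2 (Nat.log 2 i) = k := Nat.log_eq_of_pow_le_of_lt_pow h2 h3
    rw [blockWeight, h4, hγ]
  have hdiff : ∀ i, |blockWeight α β i - γ| ≤ 1 := by
    intro i
    rw [abs_le, blockWeight, hγ]
    split_ifs <;> constructor <;> linarith
  have hsum : |∑ i ∈ Finset.range n, blockWeight α β (i + 1) - γ * n| ≤ M := by
    have he : ∑ i ∈ Finset.range n, blockWeight α β (i + 1) - γ * n =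
        ∑ i ∈ Finset.range n, (blockWeight α β (i + 1) - γ) := by
      rw [Finset.sum_sub_distrib]; simp [mul_comm]
    rw [he]
    refine (Finset.abs_sum_le_sum_abs _ _).trans ?_
    have hle : ∑ i ∈ Finset.range n, |blockWeight α β (i + 1) - γ| ≤
        ∑ i ∈ Finset.range n, if i < M then (1 : ℝ) else 0 := by
      refine Finset.sum_le_sum fun i hi => ?_
      split_ifs with h
      · exact hdiff _
      · rw [hblock (i + 1) (by omega) (by have := Finset.mem_range.1 hi; omega)]
        simp
    refine hle.trans ?_
    rw [← Finset.sum_filter, Finset.sum_const, nsmul_eq_mul, mul_one]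
    have : ((Finset.range n).filter (· < M)).card ≤ M := by
      refine (Finset.card_le_card (t := Finset.range M) fun i hi => ?_).trans (by simp)
      exact Finset.mem_range.2 (Finset.mem_filter.1 hi).2
    exact_mod_cast this
  have hMr : (2 : ℝ) ^ 2 ^ k = M := by simp [hM]
  have hM0 : (0 : ℝ) < M := by positivity
  rw [hMr]
  have he : (∑ i ∈ Finset.range n, blockWeight α β (i + 1)) / (n : ℝ) - γ =
      (∑ i ∈ Finset.range n, blockWeight α β (i + 1) - γ * n) / n := by
    field_simp
  rw [he, abs_div, abs_of_pos hnpos]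
  calc _ ≤ (M : ℝ) / n := by gcongr
    _ ≤ 2 / M := by
      rw [div_le_div_iff₀ hnpos hM0]
      have h5 : M * M ≤ 2 * n := by nlinarith
      exact_mod_cast h5

lemma limsup_eq_of_approx {u : ℕ → ℝ} {b : ℝ} (hlow : ∀ n, 0 ≤ u n) (hupp : ∀ n, u n ≤ 1)
    (h1 : ∀ ε > 0, ∀ᶠ n in atTop, u n ≤ b + ε) (h2 : ∀ ε > 0, ∃ᶠ n in atTop, b - ε ≤ u n) :
    limsup u atTop = b := by
  have hb1 : IsBoundedUnder (· ≤ ·) atTop u := isBoundedUnder_of ⟨1, hupp⟩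
  have hb2 : IsBoundedUnder (· ≥ ·) atTop u := isBoundedUnder_of ⟨0, hlow⟩
  refine le_antisymm (le_of_forall_pos_le_add fun ε hε => ?_)
    (le_of_forall_pos_le_add fun ε hε => ?_)
  · exact limsup_le_of_le hb2.isCoboundedUnder_le (h1 ε hε)
  · linarith [le_limsup_of_frequently_le (h2 ε hε) hb1]

lemma liminf_eq_of_approx {u : ℕ → ℝ} {b : ℝ} (hlow : ∀ n, 0 ≤ u n) (hupp : ∀ n, u n ≤ 1)
    (h1 : ∀ ε > 0, ∀ᶠ n in atTop, b - ε ≤ u n) (h2 : ∀ ε > 0, ∃ᶠ n in atTop, u n ≤ b + ε) :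
    liminf u atTop = b := by
  have hb1 : IsBoundedUnder (· ≤ ·) atTop u := isBoundedUnder_of ⟨1, hupp⟩
  have hb2 : IsBoundedUnder (· ≥ ·) atTop u := isBoundedUnder_of ⟨0, hlow⟩
  refine le_antisymm (le_of_forall_pos_le_add fun ε hε => ?_)
    (le_of_forall_pos_le_add fun ε hε => ?_)
  · exact liminf_le_of_frequently_le (h2 ε hε) hb2
  · linarith [le_liminf_of_le hb1.isCoboundedUnder_ge (h1 ε hε)]

lemma tendsto_log_error : Tendsto (fun n : ℕ => (1 + (Nat.log 2 n : ℝ)) / n) atTop (𝓝 0) := by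
  have h1 : Tendsto (fun n : ℕ => (1 : ℝ) / n) atTop (𝓝 0) := tendsto_one_div_atTop_nhds_zero_nat
  have h2 : Tendsto (fun n : ℕ => Real.log n / n) atTop (𝓝 0) :=
    Real.isLittleO_log_id_atTop.tendsto_div_nhds_zero.comp tendsto_natCast_atTop_atTop
  have h3 := h1.add (h2.const_mul (1 / Real.log 2))
  simp only [mul_zero, add_zero] at h3
  refine squeeze_zero (fun n => by positivity) (fun n => ?_) h3
  have h4 : (Nat.log 2 n : ℝ) ≤ Real.log n / Real.log 2 := by
    have := Real.natLog_le_logb n 2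
    simpa [Real.logb] using this
  calc (1 + (Nat.log 2 n : ℝ)) / n ≤ (1 + Real.log n / Real.log 2) / n := by gcongr
    _ = _ := by ring

lemma exists_set_with_densities {α β : ℝ} (hα : 0 < α) (hαβ : α ≤ β) (hβ : β ≤ 1) :
    ∃ S : Set ℕ, 0 ∉ S ∧ 1 ∈ S ∧ S.Infinite ∧ Sᶜ.Infinite ∧
      lowerAsymptoticDensity S = α ∧ upperAsymptoticDensity S = β := by
  have hw : ∀ i, α ≤ blockWeight α β i ∧ blockWeight α β i ≤ β := by
    intro i
    rw [blockWeight]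
    split_ifs <;> constructor <;> linarith
  obtain ⟨S, hS0, hS1, hSc, hcount⟩ := exists_set_of_weights (blockWeight α β)
    (fun i => hα.trans_le (hw i).1) (fun i => (hw i).2.trans hβ)
  set v : ℕ → ℝ := fun n => (∑ i ∈ Finset.range n, blockWeight α β (i + 1)) / n with hv
  set u : ℕ → ℝ := fun n => (Nat.card ↥(S ∩ Icc 1 n) : ℝ) / n with hu
  have huv : ∀ n, |u n - v n| ≤ (1 + (Nat.log 2 n : ℝ)) / n := by
    intro n
    simp only [hu, hv]
    rw [← sub_div, abs_div, Nat.abs_cast, Nat.card_coe_set_eq]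
    have := hcount n
    gcongr
  have hclose : ∀ ε > 0, ∀ᶠ n in atTop, |u n - v n| < ε := fun ε hε =>
    (tendsto_log_error.eventually_lt_const hε).mono fun n hn => (huv n).trans_lt hn
  have hvb : ∀ n, 1 ≤ n → α ≤ v n ∧ v n ≤ β := by
    intro n hn
    have hn' : (0 : ℝ) < n := by exact_mod_cast hn
    simp only [hv]
    rw [le_div_iff₀ hn', div_le_iff₀ hn']
    constructor
    · have := Finset.card_nsmul_le_sum (Finset.range n) (fun i => blockWeight α β (i + 1)) α
        (fun i _ => (hw _).1)
      simpa [mul_comm] using this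
    · have := Finset.sum_le_card_nsmul (Finset.range n) (fun i => blockWeight α β (i + 1)) β
        (fun i _ => (hw _).2)
      simpa [mul_comm] using this
  have hlow : ∀ n, 0 ≤ u n := fun n => by positivity
  have hupp : ∀ n, u n ≤ 1 := by
    intro n
    refine div_le_one_of_le₀ ?_ (Nat.cast_nonneg _)
    rw [Nat.card_coe_set_eq]
    have := ncard_le_ncard (inter_subset_right : S ∩ Icc 1 n ⊆ Icc 1 n) (finite_Icc 1 n)
    rw [← Finset.coe_Icc, ncard_coe_finset] at this
    simp only [Nat.card_Icc, add_tsub_cancel_right, Finset.coe_Icc] at this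
    exact_mod_cast this
  have hfreq : ∀ (j : ℕ) (γ : ℝ), (∀ k, γ = if Even (2 * k + j) then α else β) →
      ∀ ε > 0, ∃ᶠ n in atTop, |v n - γ| < ε := by
    intro j γ hγ ε hε
    rw [frequently_atTop]
    intro N
    obtain ⟨K, hK⟩ := exists_nat_gt (2 / ε)
    set k := 2 * max N K + j with hk
    have hMk : k < 2 ^ 2 ^ k := Nat.lt_two_pow_self.trans Nat.lt_two_pow_self
    refine ⟨(2 ^ 2 ^ k) ^ 2 - 1, ?_, ?_⟩
    · have h1 : 2 ^ 2 ^ k * 1 ≤ (2 ^ 2 ^ k) ^ 2 := by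
        rw [pow_two]; exact Nat.mul_le_mul_left _ (by omega)
      have := le_max_left N K
      show N ≤ _
      omega
    · refine (blockWeight_average hα hαβ hβ k (hγ _)).trans_lt ?_
      have h2 : (K : ℝ) ≤ 2 ^ 2 ^ k := by
        have := le_max_right N K
        have : K ≤ 2 ^ 2 ^ k := by omega
        exact_mod_cast this
      have h3 : 2 / ε < 2 ^ 2 ^ k := hK.trans_le h2
      rw [div_lt_iff₀ hε] at h3
      rw [div_lt_iff₀ (by positivity)]
      linarith
  have hfα := hfreq 0 α fun k => by simp
  have hfβ := hfreq 1 β fun k => by simp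
  have hcomb : ∀ γ, (∀ ε > 0, ∃ᶠ n in atTop, |v n - γ| < ε) → ∀ ε > 0,
      ∃ᶠ n in atTop, |u n - γ| < ε := by
    intro γ h ε hε
    refine ((h (ε / 2) (by linarith)).and_eventually (hclose (ε / 2) (by linarith))).mono ?_
    rintro n ⟨h1, h2⟩
    calc |u n - γ| = |(u n - v n) + (v n - γ)| := by ring_nf
      _ ≤ _ := abs_add_le _ _
      _ < ε := by linarith
  have hL : lowerAsymptoticDensity S = α := by
    refine liminf_eq_of_approx hlow hupp (fun ε hε => ?_) fun ε hε => ?_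
    · filter_upwards [hclose ε hε, eventually_ge_atTop 1] with n h1 h2
      linarith [(abs_lt.1 h1).1, (hvb n h2).1]
    · exact (hcomb α hfα ε hε).mono fun n h => by linarith [(abs_lt.1 h).2]
  have hU : upperAsymptoticDensity S = β := by
    refine limsup_eq_of_approx hlow hupp (fun ε hε => ?_) fun ε hε => ?_
    · filter_upwards [hclose ε hε, eventually_ge_atTop 1] with n h1 h2
      linarith [(abs_lt.1 h1).2, (hvb n h2).2]
    · exact (hcomb β hfβ ε hε).mono fun n h => by linarith [(abs_lt.1 h).1]
  refine ⟨S, hS0, hS1, fun hfin => ?_, hSc, hL, hU⟩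
  -- A finite set would have density zero.
  have h0 : Tendsto u atTop (𝓝 0) := by
    refine squeeze_zero hlow (fun n => ?_)
      (tendsto_const_div_atTop_nhds_zero_nat (S.ncard : ℝ))
    simp only [hu, Nat.card_coe_set_eq]
    have := ncard_le_ncard (inter_subset_left : S ∩ Icc 1 n ⊆ S) hfin
    gcongr
  have := h0.liminf_eq
  have hL' : liminf u atTop = α := hL
  linarith

/-- (Marchwicki–Miska) For all `0 < α ≤ β ≤ 1` there is a convergent series of positive
terms whose achievement set is a Cantorval and whose set of reversed Kakeya conditions
has lower asymptotic density `α` and upper asymptotic density `β`. -/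
theorem exists_cantorval_with_prescribed_densities (α β : ℝ)
    (hα : 0 < α) (hαβ : α ≤ β) (hβ : β ≤ 1) :
    ∃ a : ℕ → ℝ, (∀ n, 1 ≤ n → 0 < a n) ∧ Summable a ∧
      IsCantorval (achievementSet a) ∧
      lowerAsymptoticDensity ({n : ℕ | 1 ≤ n} \ kakeyaSet a) = α ∧
      upperAsymptoticDensity ({n : ℕ | 1 ≤ n} \ kakeyaSet a) = β := by
  obtain ⟨S, h0, h1, hS, hSc, hL, hU⟩ := exists_set_with_densities hα hαβ hβ
  have hs := summable_term hS
  refine ⟨term S, fun n _ => term_pos hS n, hs, ?_, ?_, ?_⟩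
  · rw [achievementSet_eq_tailSums hs]
    exact isCantorval_tailSums hs (term_pos hS) (interior_tailSums_nonempty hS h1)
      fun δ hδ => term_gap hS hSc hδ
  · rw [kakeya_compl hS h0, hL]
  · rw [kakeya_compl hS h0, hU]
end
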